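/- arXiv:2011.03434 — 2 statements merged into one kernel-verified Lean document; each statement's English description precedes it below -/
import Mathlib

section
/- Let S be a stable matching in G* with level partitions A = A_0 ∪ ⋯ ∪ A_{n0−1} and B = B_0 ∪ ⋯ ∪ B_{n0−1}. Then S' ⊆ ∪_{i=0}^{n0−1} (A_i × B_i), and for every i no edge of E with both endpoints in A_i ∪ B_i blocks S' (i.e., S' restricted to each set A_i ∪ B_i is stable). -/
open Classical

noncomputable section

namespace PopMax

/-- A bipartite preference instance `G = (A ∪ B, E)`:
`E a b` says there is an edge between `a ∈ A` and `b ∈ B`;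
`prefA a b b'` says `a` strictly prefers `b` to `b'`;
`prefB b a a'` says `b` strictly prefers `a` to `a'`. -/
structure PrefSys (A : Type*) (B : Type*) where
  E : A → B → Prop
  prefA : A → B → B → Prop
  prefB : B → A → A → Prop

/-- Every node has a strict (linear) preference order over its neighbors. -/
def PrefSys.IsValid {A B : Type*} (I : PrefSys A B) : Prop :=
  (∀ a b, ¬ I.prefA a b b) ∧
  (∀ a b₁ b₂ b₃, I.prefA a b₁ b₂ → I.prefA a b₂ b₃ → I.prefA a b₁ b₃) ∧
  (∀ a b₁ b₂, I.E a b₁ → I.E a b₂ → b₁ ≠ b₂ → I.prefA a b₁ b₂ ∨ I.prefA a b₂ b₁) ∧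
  (∀ b a, ¬ I.prefB b a a) ∧
  (∀ b a₁ a₂ a₃, I.prefB b a₁ a₂ → I.prefB b a₂ a₃ → I.prefB b a₁ a₃) ∧
  (∀ b a₁ a₂, I.E a₁ b → I.E a₂ b → a₁ ≠ a₂ → I.prefB b a₁ a₂ ∨ I.prefB b a₂ a₁)

variable {A B : Type*}

/-- A matching: a set of pairwise disjoint edges. -/
def IsMatching (I : PrefSys A B) (M : Finset (A × B)) : Prop :=
  (∀ p ∈ M, I.E p.1 p.2) ∧
  (∀ p ∈ M, ∀ q ∈ M, p.1 = q.1 → p = q) ∧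
  (∀ p ∈ M, ∀ q ∈ M, p.2 = q.2 → p = q)

def matchedA (M : Finset (A × B)) (a : A) : Prop := ∃ b, (a, b) ∈ M
def matchedB (M : Finset (A × B)) (b : B) : Prop := ∃ a, (a, b) ∈ M

/-- A maximum matching: a matching of maximum cardinality. -/
def IsMaximumMatching (I : PrefSys A B) (M : Finset (A × B)) : Prop :=
  IsMatching I M ∧ ∀ N : Finset (A × B), IsMatching I N → N.card ≤ M.card

/-- A perfect matching matches all nodes. -/
def IsPerfectMatching (I : PrefSys A B) (M : Finset (A × B)) : Prop :=
  IsMatching I M ∧ (∀ a, matchedA M a) ∧ (∀ b, matchedB M b)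

/-- `a ∈ A` prefers matching `M` to matching `N`. -/
def prefersA (I : PrefSys A B) (a : A) (M N : Finset (A × B)) : Prop :=
  ∃ b, (a, b) ∈ M ∧ (¬ matchedA N a ∨ ∃ b', (a, b') ∈ N ∧ I.prefA a b b')

/-- `b ∈ B` prefers matching `M` to matching `N`. -/
def prefersB (I : PrefSys A B) (b : B) (M N : Finset (A × B)) : Prop :=
  ∃ a, (a, b) ∈ M ∧ (¬ matchedB N b ∨ ∃ a', (a', b) ∈ N ∧ I.prefB b a a')

/-- A node `u ∈ A ∪ B` prefers matching `M` to matching `N`. -/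
def prefers (I : PrefSys A B) (u : A ⊕ B) (M N : Finset (A × B)) : Prop :=
  match u with
  | Sum.inl a => prefersA I a M N
  | Sum.inr b => prefersB I b M N

/-- `φ(M,N)`: the number of nodes preferring `M` to `N`. -/
def phi [Fintype A] [Fintype B] (I : PrefSys A B) (M N : Finset (A × B)) : ℕ :=
  (Finset.univ.filter (fun u : A ⊕ B => prefers I u M N)).card

/-- `Δ(M,N) = φ(M,N) − φ(N,M)`. -/
def Delta [Fintype A] [Fintype B] (I : PrefSys A B) (M N : Finset (A × B)) : ℤ :=
  (phi I M N : ℤ) - (phi I N M : ℤ)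

/-- A popular max-matching: a maximum matching `M` with `Δ(M,N) ≥ 0`
for every maximum matching `N`. -/
def IsPopularMaxMatching [Fintype A] [Fintype B] (I : PrefSys A B)
    (M : Finset (A × B)) : Prop :=
  IsMaximumMatching I M ∧
    ∀ N : Finset (A × B), IsMaximumMatching I N → 0 ≤ Delta I M N

/-- The edge `(a,b) ∉ M` blocks `M`. -/
def Blocks (I : PrefSys A B) (M : Finset (A × B)) (a : A) (b : B) : Prop :=
  I.E a b ∧ (a, b) ∉ M ∧
  (¬ matchedA M a ∨ ∃ b', (a, b') ∈ M ∧ I.prefA a b b') ∧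
  (¬ matchedB M b ∨ ∃ a', (a', b) ∈ M ∧ I.prefB b a a')

/-- A stable matching: a matching with no blocking edge. -/
def IsStable (I : PrefSys A B) (S : Finset (A × B)) : Prop :=
  IsMatching I S ∧ ∀ a b, ¬ Blocks I S a b

/-- The edge weight `wt_M(a,b) ∈ {0, ±2}`. -/
def wt (I : PrefSys A B) (M : Finset (A × B)) (a : A) (b : B) : ℤ :=
  if Blocks I M a b then 2
  else if (∃ b', (a, b') ∈ M ∧ I.prefA a b' b) ∧ (∃ a', (a', b) ∈ M ∧ I.prefB b a' a) then -2
  else 0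

/-- The underlying simple graph on the node set `A ⊕ B`. -/
def graphOf (I : PrefSys A B) : SimpleGraph (A ⊕ B) :=
  SimpleGraph.fromRel (fun u w =>
    match u, w with
    | Sum.inl a, Sum.inr b => I.E a b
    | _, _ => False)

/-- The (undirected) edge `e` is an edge of the matching `M`. -/
def edgeInM (M : Finset (A × B)) (e : Sym2 (A ⊕ B)) : Prop :=
  ∃ a b, (a, b) ∈ M ∧ e = s(Sum.inl a, Sum.inr b)

/-- Consecutive edges alternate between `M` and `E ∖ M`. -/
def altRel (M : Finset (A × B)) (e f : Sym2 (A ⊕ B)) : Prop :=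
  edgeInM M e ↔ ¬ edgeInM M f

/-- An alternating path with respect to `M`. -/
def IsAltPath (I : PrefSys A B) (M : Finset (A × B)) {u w : A ⊕ B}
    (p : (graphOf I).Walk u w) : Prop :=
  p.IsPath ∧ List.Chain' (altRel M) p.edges

/-- An alternating cycle with respect to `M` (alternation also across the wrap-around). -/
def IsAltCycle (I : PrefSys A B) (M : Finset (A × B)) {w : A ⊕ B}
    (c : (graphOf I).Walk w w) : Prop :=
  c.IsCycle ∧ List.Chain' (altRel M) (c.edges ++ c.edges.take 1)

/-- `wt_M` as a function on undirected edges. -/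
def wtSym (I : PrefSys A B) (M : Finset (A × B)) : Sym2 (A ⊕ B) → ℤ :=
  Sym2.lift ⟨fun u w =>
      match u, w with
      | Sum.inl a, Sum.inr b => wt I M a b
      | Sum.inr b, Sum.inl a => wt I M a b
      | _, _ => 0,
    by rintro (a | b) (a' | b') <;> rfl⟩

/-- `wt_M(ρ) = Σ_{e ∈ ρ} wt_M(e)` for a walk `ρ`. -/
def wtWalk (I : PrefSys A B) (M : Finset (A × B)) {u w : A ⊕ B}
    (p : (graphOf I).Walk u w) : ℤ :=
  (p.edges.map (wtSym I M)).sum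

/-- The node `u ∈ A ∪ B` is unmatched in `M`. -/
def unmatchedNode (M : Finset (A × B)) : A ⊕ B → Prop
  | Sum.inl a => ¬ matchedA M a
  | Sum.inr b => ¬ matchedB M b

/-- The set of edges `(a,b) ∈ A × B` used by the walk `p`. -/
def pairsOf [Fintype A] [Fintype B] (I : PrefSys A B) {u w : A ⊕ B}
    (p : (graphOf I).Walk u w) : Finset (A × B) :=
  Finset.univ.filter (fun ab : A × B => s(Sum.inl ab.1, Sum.inr ab.2) ∈ p.edges)

/-- `M` is Pareto-optimal: no matching `N` has `φ(N,M) > 0` and `φ(M,N) = 0`. -/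
def IsParetoOptimal [Fintype A] [Fintype B] (I : PrefSys A B) (M : Finset (A × B)) : Prop :=
  ¬ ∃ N : Finset (A × B), IsMatching I N ∧ 0 < phi I N M ∧ phi I M N = 0

/-! ### The auxiliary instance `G*` -/

/-- `A* = {a_0, …, a_{n0−1} : a ∈ A}` where `n0 = |A|`. -/
abbrev AStar (A : Type*) [Fintype A] : Type _ := A × Fin (Fintype.card A)

/-- `B* = B̃ ∪ {d_1(a), …, d_{n0−1}(a) : a ∈ A}`; the dummy node `(a, j)`
(with `j : Fin (n0 − 1)`) stands for `d_{j+1}(a)`. -/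
abbrev BStar (A : Type*) (B : Type*) [Fintype A] : Type _ :=
  B ⊕ (A × Fin (Fintype.card A - 1))

/-- The auxiliary instance `G*` with its edges and preferences. -/
def starSys [Fintype A] (I : PrefSys A B) : PrefSys (AStar A) (BStar A B) where
  E := fun ai w =>
    match ai, w with
    | (a, _i), Sum.inl b => I.E a b
    | (a, i), Sum.inr (a', j) => a = a' ∧ ((i : ℕ) = (j : ℕ) ∨ (i : ℕ) = (j : ℕ) + 1)
  prefA := fun ai u v =>
    match ai, u, v with
    | (a, _i), Sum.inl b, Sum.inl b' => I.prefA a b b'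
    | (a, i), Sum.inl _b, Sum.inr (a', j) => a = a' ∧ (j : ℕ) = (i : ℕ)
    | (a, i), Sum.inr (a', j), Sum.inl _b => a = a' ∧ (j : ℕ) + 1 = (i : ℕ)
    | (a, i), Sum.inr (a', j), Sum.inr (a'', j') =>
        a = a' ∧ a = a'' ∧ (j : ℕ) + 1 = (i : ℕ) ∧ (j' : ℕ) = (i : ℕ)
  prefB := fun w x y =>
    match w, x, y with
    | Sum.inl b, (a, i), (a', i') =>
        (i' : ℕ) < (i : ℕ) ∨ ((i : ℕ) = (i' : ℕ) ∧ I.prefB b a a')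
    | Sum.inr (a, j), (a', i), (a'', i') =>
        a' = a ∧ a'' = a ∧ (i : ℕ) = (j : ℕ) ∧ (i' : ℕ) = (j : ℕ) + 1

/-- The projection `S ↦ S'`: delete edges incident to dummy nodes and replace
`(a_i, b̃)` by `(a, b)`. -/
def proj [Fintype A] [Fintype B] (S : Finset (AStar A × BStar A B)) : Finset (A × B) :=
  Finset.univ.filter (fun ab : A × B =>
    ∃ i : Fin (Fintype.card A), ((ab.1, i), (Sum.inl ab.2 : BStar A B)) ∈ S)

/-- `a ∈ A_i` for the level partition of `A` induced by a (stable) matching `S` in `G*`: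
for `i ≤ n0 − 2`, `a ∈ A_i` iff `(a_i, b̃) ∈ S` for some `b̃ ∈ B̃`;
`A_{n0−1}` consists of all remaining nodes of `A`. -/
def AtLevelA [Fintype A] (S : Finset (AStar A × BStar A B)) (a : A) (i : ℕ) : Prop :=
  (i + 1 < Fintype.card A ∧
     ∃ j : Fin (Fintype.card A), (j : ℕ) = i ∧
       ∃ b : B, ((a, j), (Sum.inl b : BStar A B)) ∈ S) ∨
  (i + 1 = Fintype.card A ∧
     ∀ j : Fin (Fintype.card A), (j : ℕ) + 1 < Fintype.card A →
       ∀ b : B, ((a, j), (Sum.inl b : BStar A B)) ∉ S)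

/-- `b ∈ B_i` for the level partition of `B` induced by a (stable) matching `S` in `G*`:
for `1 ≤ i ≤ n0 − 1`, `b ∈ B_i` iff `(a_i, b̃) ∈ S` for some `a ∈ A_i`;
`B_0` consists of all remaining nodes of `B`. -/
def AtLevelB [Fintype A] (S : Finset (AStar A × BStar A B)) (b : B) (i : ℕ) : Prop :=
  (1 ≤ i ∧ i < Fintype.card A ∧
     ∃ j : Fin (Fintype.card A), (j : ℕ) = i ∧
       ∃ a : A, AtLevelA S a i ∧ ((a, j), (Sum.inl b : BStar A B)) ∈ S) ∨
  (i = 0 ∧ ∀ j : Fin (Fintype.card A), 1 ≤ (j : ℕ) →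
       ∀ a : A, AtLevelA S a (j : ℕ) → ((a, j), (Sum.inl b : BStar A B)) ∉ S)

/-!
In a stable matching `S` of `G*` every dummy `d_j(a)` is matched, being the top choice of `a_j`.
So the `n0 - 1` dummies of `a` use up all but exactly one of the `n0` copies of `a`. The copies
`a_i` with `i < n0 - 1` are matched as well, each being the top choice of `d_{i+1}(a)`, so the
level of `a` is the index of the copy the dummies leave free. An edge of `E` inside a level `i`
that blocks `S'` therefore lifts to the edge `(a_i, b̃)`, which blocks `S`.
-/

section Matching

variable {I : PrefSys A B} {M : Finset (A × B)} {a a' : A} {b b' : B}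

lemma IsMatching.right_unique (hM : IsMatching I M) (h : (a, b) ∈ M) (h' : (a, b') ∈ M) :
    b = b' :=
  congrArg Prod.snd (hM.2.1 _ h _ h' rfl)

lemma IsMatching.left_unique (hM : IsMatching I M) (h : (a, b) ∈ M) (h' : (a', b) ∈ M) :
    a = a' :=
  congrArg Prod.fst (hM.2.2 _ h _ h' rfl)

lemma IsMatching.blocks_iff (hM : IsMatching I M) :
    Blocks I M a b ↔ I.E a b ∧ (a, b) ∉ M ∧
      (∀ b', (a, b') ∈ M → I.prefA a b b') ∧ (∀ a', (a', b) ∈ M → I.prefB b a a') := by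
  have hA : (¬ matchedA M a ∨ ∃ b', (a, b') ∈ M ∧ I.prefA a b b') ↔
      ∀ b', (a, b') ∈ M → I.prefA a b b' := by
    refine ⟨?_, fun h ↦ ?_⟩
    · rintro (hun | ⟨b₀, hb₀, hpref⟩) b' hb'
      · exact absurd ⟨b', hb'⟩ hun
      · rwa [hM.right_unique hb' hb₀]
    · by_cases hm : matchedA M a
      · exact .inr (hm.imp fun b' hb' ↦ ⟨hb', h b' hb'⟩)
      · exact .inl hm
  have hB : (¬ matchedB M b ∨ ∃ a', (a', b) ∈ M ∧ I.prefB b a a') ↔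
      ∀ a', (a', b) ∈ M → I.prefB b a a' := by
    refine ⟨?_, fun h ↦ ?_⟩
    · rintro (hun | ⟨a₀, ha₀, hpref⟩) a' ha'
      · exact absurd ⟨a', ha'⟩ hun
      · rwa [hM.left_unique ha' ha₀]
    · by_cases hm : matchedB M b
      · exact .inr (hm.imp fun a' ha' ↦ ⟨ha', h a' ha'⟩)
      · exact .inl hm
  rw [Blocks, hA, hB]

lemma IsStable.matchedB_of_forall_prefA (hM : IsStable I M) (hE : I.E a b)
    (htop : ∀ b', I.E a b' → b' ≠ b → I.prefA a b b') : matchedB M b := by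
  by_contra hun
  refine hM.2 a b (hM.1.blocks_iff.2 ⟨hE, fun h ↦ hun ⟨a, h⟩, fun b' hb' ↦ ?_,
    fun a' ha' ↦ absurd ⟨a', ha'⟩ hun⟩)
  exact htop b' (hM.1.1 _ hb') fun h ↦ hun ⟨a, h ▸ hb'⟩

lemma IsStable.matchedA_of_forall_prefB (hM : IsStable I M) (hE : I.E a b)
    (htop : ∀ a', I.E a' b → a' ≠ a → I.prefB b a a') : matchedA M a := by
  by_contra hun
  refine hM.2 a b (hM.1.blocks_iff.2 ⟨hE, fun h ↦ hun ⟨b, h⟩,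
    fun b' hb' ↦ absurd ⟨b', hb'⟩ hun, fun a' ha' ↦ ?_⟩)
  exact htop a' (hM.1.1 _ ha') fun h ↦ hun ⟨b, h ▸ ha'⟩

end Matching

section StarSys

variable [Fintype A] {I : PrefSys A B} {S : Finset (AStar A × BStar A B)} {a : A} {b : B}
  {i : Fin (Fintype.card A)} {j : Fin (Fintype.card A - 1)}

lemma starSys_prefA_dummy (hij : (i : ℕ) = j + 1) {w : BStar A B}
    (hE : (starSys I).E (a, i) w) (hne : w ≠ .inr (a, j)) :
    (starSys I).prefA (a, i) (.inr (a, j)) w := by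
  rcases w with b | ⟨a', j'⟩
  · exact ⟨rfl, hij.symm⟩
  · obtain ⟨rfl, hlower | hupper⟩ := hE
    · exact ⟨rfl, rfl, hij.symm, hlower.symm⟩
    · exact absurd (by rw [Fin.ext (by omega : (j' : ℕ) = j)]) hne

lemma starSys_prefB_dummy (hij : (i : ℕ) = j) {x : AStar A}
    (hE : (starSys I).E x (.inr (a, j))) (hne : x ≠ (a, i)) :
    (starSys I).prefB (.inr (a, j)) (a, i) x := by
  obtain ⟨a', i'⟩ := x
  obtain ⟨rfl, hlower | hupper⟩ := hE
  · exact absurd (by rw [Fin.ext (by omega : (i' : ℕ) = i)]) hne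
  · exact ⟨rfl, rfl, hij, hupper⟩

lemma IsStable.exists_mem_dummy (hS : IsStable (starSys I) S) (a : A)
    (j : Fin (Fintype.card A - 1)) : ∃ i, ((a, i), .inr (a, j)) ∈ S := by
  let upper : Fin (Fintype.card A) := ⟨j + 1, by omega⟩
  have hmatched : matchedB S (.inr (a, j)) :=
    hS.matchedB_of_forall_prefA (a := (a, upper)) ⟨rfl, .inr rfl⟩
      fun _ ↦ starSys_prefA_dummy rfl
  obtain ⟨⟨a', i⟩, hi⟩ := hmatched
  obtain ⟨rfl, -⟩ := hS.1.1 _ hi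
  exact ⟨i, hi⟩

lemma IsStable.matchedA_of_lt (hS : IsStable (starSys I) S) (a : A)
    (hi : (i : ℕ) + 1 < Fintype.card A) : matchedA S (a, i) :=
  hS.matchedA_of_forall_prefB (b := .inr (a, ⟨i, by omega⟩)) ⟨rfl, .inl rfl⟩
    fun _ ↦ starSys_prefB_dummy rfl

/-- The copy `a_i` is not matched to a dummy, i.e. it is unmatched or matched into `B̃`. In a
stable matching exactly one copy of `a` is free, and its index is the level of `a`. -/
def IsFreeCopy (S : Finset (AStar A × BStar A B)) (a : A) (i : Fin (Fintype.card A)) : Prop :=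
  ∀ d, ((a, i), .inr d) ∉ S

lemma IsMatching.isFreeCopy_of_mem_inl (hS : IsMatching (starSys I) S) (h : ((a, i), .inl b) ∈ S) :
    IsFreeCopy S a i :=
  fun _ hd ↦ Sum.inl_ne_inr (hS.right_unique h hd)

lemma IsFreeCopy.exists_mem_inl (hi : IsFreeCopy S a i) (hm : matchedA S (a, i)) :
    ∃ b, ((a, i), .inl b) ∈ S := by
  obtain ⟨b | d, hw⟩ := hm
  · exact ⟨b, hw⟩
  · exact absurd hw (hi d)

lemma IsStable.existsUnique_isFreeCopy (hS : IsStable (starSys I) S) (a : A) :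
    ∃! i, IsFreeCopy S a i := by
  choose f hf using hS.exists_mem_dummy a
  have hinj : Function.Injective f := fun j j' h ↦
    congrArg Prod.snd (Sum.inr_injective (hS.1.right_unique (hf j) (h ▸ hf j')))
  have hfree : ∀ i, IsFreeCopy S a i ↔ i ∉ Finset.univ.image f := fun i ↦ by
    simp only [Finset.mem_image, Finset.mem_univ, true_and, not_exists]
    refine ⟨fun hi j hj ↦ hi _ (hj ▸ hf j), fun hi ⟨a', j⟩ hd ↦ ?_⟩
    obtain ⟨rfl, -⟩ := hS.1.1 _ hd
    exact hi j (congrArg Prod.snd (hS.1.left_unique (hf j) hd))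
  have hcard : (Finset.univ.image f)ᶜ.card = 1 := by
    have := Fintype.card_pos_iff.2 ⟨a⟩
    rw [Finset.card_compl, Finset.card_image_of_injective _ hinj, Finset.card_fin,
      Fintype.card_fin]
    omega
  obtain ⟨i, hi⟩ := Finset.card_eq_one.1 hcard
  simp only [hfree, ← Finset.mem_compl, hi, Finset.mem_singleton, existsUnique_eq]

lemma IsStable.atLevelA_iff_isFreeCopy (hS : IsStable (starSys I) S) :
    AtLevelA S a i ↔ IsFreeCopy S a i := by
  constructor
  · rintro (⟨-, k, hk, b, hb⟩ | ⟨hlast, hnone⟩)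
    · exact Fin.ext hk ▸ hS.1.isFreeCopy_of_mem_inl hb
    · obtain ⟨k, hk, -⟩ := hS.existsUnique_isFreeCopy a
      have hk_last : ¬ (k : ℕ) + 1 < Fintype.card A := fun hlt ↦
        have ⟨b, hb⟩ := hk.exists_mem_inl (hS.matchedA_of_lt a hlt)
        hnone k hlt b hb
      rwa [Fin.ext (by omega : (i : ℕ) = k)]
  · intro hi
    by_cases hlt : (i : ℕ) + 1 < Fintype.card A
    · exact .inl ⟨hlt, i, rfl, hi.exists_mem_inl (hS.matchedA_of_lt a hlt)⟩
    · refine .inr ⟨by omega, fun k hk b hb ↦ hlt ?_⟩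
      rwa [(hS.existsUnique_isFreeCopy a).unique hi (hS.1.isFreeCopy_of_mem_inl hb)]

lemma AtLevelA.lt_card {l : ℕ} (h : AtLevelA S a l) : l < Fintype.card A := by
  rcases h with ⟨h, -⟩ | ⟨h, -⟩ <;> omega

lemma IsStable.atLevelA_of_mem (hS : IsStable (starSys I) S) (h : ((a, i), .inl b) ∈ S) :
    AtLevelA S a i :=
  hS.atLevelA_iff_isFreeCopy.2 (hS.1.isFreeCopy_of_mem_inl h)

lemma IsStable.atLevelB_iff_of_mem (hS : IsStable (starSys I) S) (h : ((a, i), .inl b) ∈ S)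
    {l : ℕ} : AtLevelB S b l ↔ l = i := by
  have hindex : ∀ {a' k}, ((a', k), .inl b) ∈ S → k = i := fun h' ↦
    congrArg Prod.snd (hS.1.left_unique h' h)
  constructor
  · rintro (⟨-, -, k, rfl, a', -, h'⟩ | ⟨rfl, hnone⟩)
    · rw [hindex h']
    · by_contra hne
      exact hnone i (by omega) a (hS.atLevelA_of_mem h) h
  · rintro rfl
    rcases Nat.eq_zero_or_pos i with hzero | hpos
    · refine .inr ⟨hzero, fun k hk a' _ h' ↦ ?_⟩
      rw [hindex h'] at hk
      omega
    · exact .inl ⟨hpos, i.2, i, rfl, a, hS.atLevelA_of_mem h, h⟩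

end StarSys

section Projection

variable [Fintype A] [Fintype B] {I : PrefSys A B} {S : Finset (AStar A × BStar A B)} {a : A}
  {b : B}

lemma mem_proj : (a, b) ∈ proj S ↔ ∃ i, ((a, i), .inl b) ∈ S := by
  simp [proj]

lemma IsStable.isMatching_proj (hS : IsStable (starSys I) S) : IsMatching I (proj S) := by
  refine ⟨fun ⟨a, b⟩ h ↦ ?_, ?_, ?_⟩
  · obtain ⟨i, hi⟩ := mem_proj.1 h
    exact hS.1.1 _ hi
  · rintro ⟨a, b⟩ h ⟨_, b'⟩ h' rfl
    obtain ⟨i, hi⟩ := mem_proj.1 h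
    obtain ⟨k, hk⟩ := mem_proj.1 h'
    obtain rfl : i = k :=
      (hS.existsUnique_isFreeCopy a).unique (hS.1.isFreeCopy_of_mem_inl hi)
        (hS.1.isFreeCopy_of_mem_inl hk)
    rw [Sum.inl_injective (hS.1.right_unique hi hk)]
  · rintro ⟨a, b⟩ h ⟨a', _⟩ h' rfl
    obtain ⟨i, hi⟩ := mem_proj.1 h
    obtain ⟨k, hk⟩ := mem_proj.1 h'
    obtain rfl : a = a' := congrArg Prod.fst (hS.1.left_unique hi hk)
    rfl

lemma IsStable.blocks_starSys_of_blocks_proj (hS : IsStable (starSys I) S)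
    {i : Fin (Fintype.card A)} (ha : AtLevelA S a i) (hb : AtLevelB S b i)
    (hblock : Blocks I (proj S) a b) : Blocks (starSys I) S (a, i) (.inl b) := by
  obtain ⟨hE, hnot, hprefA, hprefB⟩ := hS.isMatching_proj.blocks_iff.1 hblock
  refine hS.1.blocks_iff.2 ⟨hE, fun h ↦ hnot (mem_proj.2 ⟨i, h⟩), ?_, ?_⟩
  · rintro (b' | d) hw
    · exact hprefA b' (mem_proj.2 ⟨i, hw⟩)
    · exact absurd hw (hS.atLevelA_iff_isFreeCopy.1 ha d)
  · rintro ⟨a', k⟩ hk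
    exact .inr ⟨(hS.atLevelB_iff_of_mem hk).1 hb, hprefB a' (mem_proj.2 ⟨k, hk⟩)⟩

end Projection

theorem stmt4_general {A B : Type*} [Fintype A] [Fintype B] (I : PrefSys A B)
    (S : Finset (AStar A × BStar A B)) (hS : IsStable (starSys I) S) :
    (∀ a b, (a, b) ∈ proj S → ∃ i : ℕ, AtLevelA S a i ∧ AtLevelB S b i) ∧
    (∀ (i : ℕ) (a : A) (b : B), AtLevelA S a i → AtLevelB S b i →
        ¬ Blocks I (proj S) a b) := by
  refine ⟨fun a b hab ↦ ?_, fun i a b ha hb hblock ↦ ?_⟩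
  · obtain ⟨i, hi⟩ := mem_proj.1 hab
    exact ⟨i, hS.atLevelA_of_mem hi, (hS.atLevelB_iff_of_mem hi).2 rfl⟩
  · exact hS.2 _ _ (hS.blocks_starSys_of_blocks_proj (i := ⟨i, ha.lt_card⟩) ha hb hblock)

/-- For a stable matching `S` in `G*` with level partitions
`A = A_0 ∪ ⋯ ∪ A_{n0−1}` and `B = B_0 ∪ ⋯ ∪ B_{n0−1}`:
`S' ⊆ ∪_i (A_i × B_i)`, and no edge of `E` with both endpoints in `A_i ∪ B_i`
blocks `S'`. -/
theorem stmt4 {A B : Type*} [Fintype A] [Fintype B] [DecidableEq A] [DecidableEq B]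
    (I : PrefSys A B) (hI : I.IsValid)
    (S : Finset (AStar A × BStar A B)) (hS : IsStable (starSys I) S) :
    (∀ a b, (a, b) ∈ proj S → ∃ i : ℕ, AtLevelA S a i ∧ AtLevelB S b i) ∧
    (∀ (i : ℕ) (a : A) (b : B), I.E a b → AtLevelA S a i → AtLevelB S b i →
        ¬ Blocks I (proj S) a b) :=
  (stmt4_general I S hS).imp_right fun hstable i a b _ ↦ hstable i a b

end PopMax
end
end

section
/- Suppose |A| = |B| = n0 and M is a popular perfect matching in G, i.e., a perfect matching with Δ(M,N) ≥ 0 for every perfect matching N in G. Then there exists α : A ∪ B → ℤ such that α_a + α_b ≥ wt_M(a,b) for every edge (a,b) ∈ E, α_a + α_b = 0 for every edge (a,b) ∈ M, α_a ∈ {0, −2, −4, …, −2(n0−1)} for every a ∈ A, and α_b ∈ {0, 2, 4, …, 2(n0−1)} for every b ∈ B; in particular Σ_{u ∈ A∪B} α_u = 0. -/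
open Classical

noncomputable section

namespace PopMax

variable {A B : Type*}

/-!
Write `m` for the bijection whose graph is `M`. A permutation `σ` of `A` such that every
`(σ a, m a)` is an edge yields a perfect matching `N`, and `Δ(M, N) = -∑ wt_M(σ a, m a)`. So
popularity says that in the directed graph on `A` with an arc `a → a'` of weight `wt_M(a', m a) / 2`
for each edge `(a', m a)`, no directed cycle has positive weight. The largest weight `k a` of a
simple walk from `a` is then a potential, and it lies in `{0, …, n0 - 1}` because arcs weigh at most
`1`. The certificate is `α_a = -2 k(a)` and `α_b = 2 k(m⁻¹ b)`.
-/

section Walks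

variable {V G : Type*}

/-- The weight of the walk visiting the vertices of a list in order, where the step from `x` to `y`
has weight `c x y`. -/
def walkWeight [AddMonoid G] (c : V → V → G) (l : List V) : G :=
  (List.zipWith c l l.tail).sum

/-- The simple walks from `a` along the relation `R`, each given by its vertices after `a`. -/
def simpleWalksFrom (R : V → V → Prop) (a : V) : Set (List V) :=
  {l | (a :: l).Nodup ∧ (a :: l).IsChain R}

theorem nil_mem_simpleWalksFrom (R : V → V → Prop) (a : V) : [] ∈ simpleWalksFrom R a :=
  ⟨List.nodup_singleton a, List.isChain_singleton a⟩

theorem finite_simpleWalksFrom [Finite V] (R : V → V → Prop) (a : V) :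
    (simpleWalksFrom R a).Finite := by
  have := Fintype.ofFinite V
  have hfin : {l : List V | l.Nodup}.Finite :=
    Set.finite_coe_iff.1 (inferInstanceAs (Finite {l : List V // l.Nodup}))
  exact hfin.subset fun _ hl => hl.1.of_cons

theorem walkWeight_singleton [AddMonoid G] (c : V → V → G) (a : V) : walkWeight c [a] = 0 := rfl

theorem walkWeight_cons_cons [AddMonoid G] (c : V → V → G) (a b : V) (l : List V) :
    walkWeight c (a :: b :: l) = c a b + walkWeight c (b :: l) := by
  simp [walkWeight]

theorem walkWeight_append_cons [AddMonoid G] (c : V → V → G) (l₁ : List V) (a : V) (l₂ : List V) :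
    walkWeight c (l₁ ++ a :: l₂) = walkWeight c (l₁ ++ [a]) + walkWeight c (a :: l₂) := by
  induction l₁ with
  | nil => simp [walkWeight_singleton]
  | cons x l ih =>
    cases l with
    | nil => simp [walkWeight_cons_cons, walkWeight_singleton]
    | cons y l =>
      simp only [List.cons_append, walkWeight_cons_cons] at ih ⊢
      rw [ih, add_assoc]

theorem walkWeight_cons_le_length_nsmul [AddCommMonoid G] [PartialOrder G] [IsOrderedAddMonoid G]
    {c : V → V → G} {K : G} (hc : ∀ a b, c a b ≤ K) (a : V) (l : List V) :
    walkWeight c (a :: l) ≤ l.length • K := by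
  induction l generalizing a with
  | nil => simp [walkWeight_singleton]
  | cons b l ih =>
    rw [walkWeight_cons_cons, List.length_cons, succ_nsmul']
    exact add_le_add (hc a b) (ih b)

theorem getElem_succ_closed_walk [DecidableEq V] {a : V} {l : List V} (hl : (a :: l).Nodup) {i : ℕ}
    (hi : i < (a :: l).length) :
    (a :: l ++ [a])[i + 1]'(by simpa using hi) = (a :: l).formPerm (a :: l)[i] := by
  rw [List.formPerm_apply_getElem _ hl]
  obtain h | h : i < l.length ∨ i = l.length := by grind
  · simp [Nat.mod_eq_of_lt, h]
  · simp [h]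

theorem rel_formPerm_of_isChain_closed_walk [DecidableEq V] {R : V → V → Prop} (hR : ∀ x, R x x)
    {a : V} {l : List V} (hl : (a :: l).Nodup) (hchain : (a :: l ++ [a]).IsChain R) (x : V) :
    R x ((a :: l).formPerm x) := by
  by_cases hx : x ∈ a :: l
  · obtain ⟨i, hi, rfl⟩ := List.getElem_of_mem hx
    have hstep := List.isChain_iff_getElem.1 hchain i (by simpa using hi)
    rwa [getElem_succ_closed_walk hl hi, List.getElem_append_left hi] at hstep
  · rw [List.formPerm_apply_of_notMem hx]
    exact hR x

theorem sum_formPerm_eq_walkWeight [Fintype V] [DecidableEq V] [AddCommMonoid G] {c : V → V → G}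
    (hc : ∀ x, c x x = 0) {a : V} {l : List V} (hl : (a :: l).Nodup) :
    ∑ x, c x ((a :: l).formPerm x) = walkWeight c (a :: l ++ [a]) := by
  have hsteps : (a :: l).map (fun x => c x ((a :: l).formPerm x)) =
      List.zipWith c (a :: l ++ [a]) (a :: l ++ [a]).tail := by
    refine List.ext_getElem (by simp) fun i hi _ => ?_
    rw [List.length_map] at hi
    rw [List.getElem_map, ← getElem_succ_closed_walk hl hi, List.getElem_zipWith,
      List.getElem_append_left hi, List.getElem_tail]
  calc ∑ x, c x ((a :: l).formPerm x)
      = ∑ x ∈ (a :: l).toFinset, c x ((a :: l).formPerm x) := by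
        refine (Finset.sum_subset (Finset.subset_univ _) fun x _ hx => ?_).symm
        rw [List.formPerm_apply_of_notMem (mt List.mem_toFinset.2 hx), hc]
    _ = ((a :: l).map fun x => c x ((a :: l).formPerm x)).sum := List.sum_toFinset _ hl
    _ = walkWeight c (a :: l ++ [a]) := by rw [hsteps, walkWeight]

theorem walkWeight_closed_nonpos [Fintype V] [AddCommMonoid G] [LE G] {c : V → V → G}
    {R : V → V → Prop} (hR : ∀ x, R x x) (hc : ∀ x, c x x = 0)
    (hperm : ∀ σ : Equiv.Perm V, (∀ x, R x (σ x)) → ∑ x, c x (σ x) ≤ 0)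
    {a : V} {l : List V} (hl : (a :: l).Nodup) (hchain : (a :: l ++ [a]).IsChain R) :
    walkWeight c (a :: l ++ [a]) ≤ 0 := by
  rw [← sum_formPerm_eq_walkWeight hc hl]
  exact hperm _ (rel_formPerm_of_isChain_closed_walk hR hl hchain)

/-- `q` is the largest weight of a simple walk from `a` along `R`. -/
def IsMaxWalkWeight [AddMonoid G] [LE G] (c : V → V → G) (R : V → V → Prop) (a : V) (q : G) :
    Prop :=
  IsGreatest ((fun l => walkWeight c (a :: l)) '' simpleWalksFrom R a) q

theorem exists_isMaxWalkWeight [Finite V] [AddMonoid G] [LinearOrder G] (c : V → V → G)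
    (R : V → V → Prop) (a : V) : ∃ q, IsMaxWalkWeight c R a q := by
  obtain ⟨l, hl, hmax⟩ := (simpleWalksFrom R a).exists_max_image (fun l => walkWeight c (a :: l))
    (finite_simpleWalksFrom R a) ⟨[], nil_mem_simpleWalksFrom R a⟩
  exact ⟨_, Set.mem_image_of_mem _ hl, Set.forall_mem_image.2 hmax⟩

namespace IsMaxWalkWeight

variable {c : V → V → G} {R : V → V → Prop} {a : V} {q : G}

theorem nonneg [AddMonoid G] [LE G] (hq : IsMaxWalkWeight c R a q) : 0 ≤ q :=
  hq.2 ⟨[], nil_mem_simpleWalksFrom R a, walkWeight_singleton c a⟩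

variable [Fintype V] [AddCommMonoid G] [PartialOrder G] [IsOrderedAddMonoid G]

theorem le_card_sub_one_nsmul (hq : IsMaxWalkWeight c R a q) {K : G} (hK : 0 ≤ K)
    (hc : ∀ x y, c x y ≤ K) : q ≤ (Fintype.card V - 1) • K := by
  obtain ⟨l, ⟨hnodup, -⟩, rfl⟩ := hq.1
  exact (walkWeight_cons_le_length_nsmul hc a l).trans
    (nsmul_le_nsmul_left hK (Nat.le_sub_one_of_lt hnodup.length_le_card))

theorem step_add_walkWeight_le (hq : IsMaxWalkWeight c R a q) (hR : ∀ x, R x x)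
    (hc : ∀ x, c x x = 0)
    (hperm : ∀ σ : Equiv.Perm V, (∀ x, R x (σ x)) → ∑ x, c x (σ x) ≤ 0)
    {b : V} (hab : R a b) {l : List V} (hl : l ∈ simpleWalksFrom R b) :
    c a b + walkWeight c (b :: l) ≤ q := by
  rw [← walkWeight_cons_cons]
  have hchain : (a :: b :: l).IsChain R := List.isChain_cons_cons.2 ⟨hab, hl.2⟩
  by_cases ha : a ∈ b :: l
  · obtain ⟨l₁, l₂, hsplit⟩ := List.append_of_mem ha
    have hnodup := hl.1
    rw [hsplit] at hchain hnodup ⊢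
    rw [← List.cons_append] at hchain ⊢
    obtain ⟨hchain₁, hchain₂⟩ := List.isChain_split.1 hchain
    have hnodup₁ : (a :: l₁).Nodup :=
      List.Nodup.of_append_left (l₂ := l₂) (List.nodup_middle.1 hnodup)
    calc walkWeight c (a :: l₁ ++ a :: l₂)
        = walkWeight c (a :: l₁ ++ [a]) + walkWeight c (a :: l₂) := walkWeight_append_cons ..
      _ ≤ 0 + q := add_le_add (walkWeight_closed_nonpos hR hc hperm hnodup₁ hchain₁)
          (hq.2 ⟨l₂, ⟨hnodup.of_append_right, hchain₂⟩, rfl⟩)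
      _ = q := zero_add q
  · exact hq.2 ⟨b :: l, ⟨List.nodup_cons.2 ⟨ha, hl.1⟩, hchain⟩, rfl⟩

end IsMaxWalkWeight

theorem exists_potential_of_perm_sum_nonpos [Fintype V] [AddCommMonoid G] [LinearOrder G]
    [IsOrderedAddMonoid G] {c : V → V → G} {R : V → V → Prop} (hR : ∀ x, R x x)
    (hc : ∀ x, c x x = 0) {K : G} (hcK : ∀ x y, c x y ≤ K)
    (hperm : ∀ σ : Equiv.Perm V, (∀ x, R x (σ x)) → ∑ x, c x (σ x) ≤ 0) :
    ∃ q : V → G, (∀ x, 0 ≤ q x) ∧ (∀ x, q x ≤ (Fintype.card V - 1) • K) ∧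
      ∀ x y, R x y → c x y + q y ≤ q x := by
  choose q hq using exists_isMaxWalkWeight c R
  refine ⟨q, fun x => (hq x).nonneg,
    fun x => (hq x).le_card_sub_one_nsmul (hc x ▸ hcK x x) hcK, fun x y hxy => ?_⟩
  obtain ⟨l, hl, hly⟩ := (hq y).1
  rw [← hly]
  exact (hq x).step_add_walkWeight_le hR hc hperm hxy hl

end Walks

section Matchings

theorem two_dvd_wt (I : PrefSys A B) (M : Finset (A × B)) (a : A) (b : B) : 2 ∣ wt I M a b := by
  unfold wt
  split_ifs <;> simp

theorem wt_le_two (I : PrefSys A B) (M : Finset (A × B)) (a : A) (b : B) : wt I M a b ≤ 2 := by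
  unfold wt
  split_ifs <;> simp

/-- The vote of a voter with strict preference `r` between `x` and `y`: `1` for `x`, `-1` for `y`,
and `0` for an abstention. -/
def vote {X : Type*} (r : X → X → Prop) (x y : X) : ℤ :=
  (if r x y then 1 else 0) - (if r y x then 1 else 0)

theorem neg_vote {X : Type*} (r : X → X → Prop) (x y : X) : -vote r x y = vote r y x :=
  neg_sub _ _

theorem vote_self {X : Type*} (r : X → X → Prop) (x : X) : vote r x x = 0 := sub_self _

namespace PrefSys.IsValid

variable {I : PrefSys A B}

theorem prefA_irrefl (hI : I.IsValid) (a : A) (b : B) : ¬ I.prefA a b b := hI.1 a b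

theorem prefA_asymm (hI : I.IsValid) {a : A} {b b' : B} (h : I.prefA a b b') :
    ¬ I.prefA a b' b :=
  fun h' => hI.1 a b (hI.2.1 a b b' b h h')

theorem prefB_asymm (hI : I.IsValid) {b : B} {a a' : A} (h : I.prefB b a a') :
    ¬ I.prefB b a' a :=
  fun h' => hI.2.2.2.1 b a (hI.2.2.2.2.1 b a a' a h h')

theorem prefA_total (hI : I.IsValid) {a : A} {b b' : B} (hb : I.E a b) (hb' : I.E a b')
    (hne : b ≠ b') : I.prefA a b b' ∨ I.prefA a b' b :=
  hI.2.2.1 a b b' hb hb' hne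

theorem prefB_total (hI : I.IsValid) {b : B} {a a' : A} (ha : I.E a b) (ha' : I.E a' b)
    (hne : a ≠ a') : I.prefB b a a' ∨ I.prefB b a' a :=
  hI.2.2.2.2.2 b a a' ha ha' hne

end PrefSys.IsValid

variable [Fintype A] [Fintype B]

/-- The graph of a bijection `m`, that is, the perfect matching in which `m a` is the partner of
`a`. -/
def matchingOf (m : A ≃ B) : Finset (A × B) :=
  Finset.univ.filter fun p => m p.1 = p.2

theorem mem_matchingOf {m : A ≃ B} {a : A} {b : B} : (a, b) ∈ matchingOf m ↔ m a = b := by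
  simp [matchingOf]

theorem matchedA_matchingOf (m : A ≃ B) (a : A) : matchedA (matchingOf m) a :=
  ⟨m a, mem_matchingOf.2 rfl⟩

theorem matchedB_matchingOf (m : A ≃ B) (b : B) : matchedB (matchingOf m) b :=
  ⟨m.symm b, mem_matchingOf.2 (m.apply_symm_apply b)⟩

theorem exists_partnerA_matchingOf {m : A ≃ B} {a : A} {p : B → Prop} :
    (∃ b, (a, b) ∈ matchingOf m ∧ p b) ↔ p (m a) := by
  simp only [mem_matchingOf, exists_eq_left']

theorem exists_partnerB_matchingOf {m : A ≃ B} {b : B} {p : A → Prop} :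
    (∃ a, (a, b) ∈ matchingOf m ∧ p a) ↔ p (m.symm b) := by
  simp only [mem_matchingOf, ← m.eq_symm_apply, exists_eq_left]

variable {I : PrefSys A B} {m n : A ≃ B}

theorem isPerfectMatching_matchingOf (hm : ∀ a, I.E a (m a)) :
    IsPerfectMatching I (matchingOf m) := by
  refine ⟨⟨?_, ?_, ?_⟩, matchedA_matchingOf m, matchedB_matchingOf m⟩
  · rintro ⟨a, b⟩ hab
    exact mem_matchingOf.1 hab ▸ hm a
  · rintro ⟨a, b⟩ hab ⟨a', b'⟩ hab' (rfl : a = a')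
    rw [← mem_matchingOf.1 hab, ← mem_matchingOf.1 hab']
  · rintro ⟨a, b⟩ hab ⟨a', b'⟩ hab' (rfl : b = b')
    rw [m.injective ((mem_matchingOf.1 hab).trans (mem_matchingOf.1 hab').symm)]

theorem IsPerfectMatching.exists_eq_matchingOf {M : Finset (A × B)} (hM : IsPerfectMatching I M) :
    ∃ m : A ≃ B, (∀ a, I.E a (m a)) ∧ M = matchingOf m := by
  obtain ⟨⟨hE, huniqA, huniqB⟩, hmatchedA, hmatchedB⟩ := hM
  choose f hf using hmatchedA
  choose g hg using hmatchedB
  have hf_eq {a : A} {b : B} (hab : (a, b) ∈ M) : f a = b :=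
    congrArg Prod.snd (huniqA _ (hf a) _ hab rfl)
  have hg_eq {a : A} {b : B} (hab : (a, b) ∈ M) : g b = a :=
    congrArg Prod.fst (huniqB _ (hg b) _ hab rfl)
  refine ⟨⟨f, g, fun a => hg_eq (hf a), fun b => hf_eq (hg b)⟩, fun a => hE _ (hf a), ?_⟩
  ext ⟨a, b⟩
  exact ⟨fun hab => mem_matchingOf.2 (hf_eq hab), fun hab => mem_matchingOf.1 hab ▸ hf a⟩

theorem prefersA_matchingOf {a : A} :
    prefersA I a (matchingOf m) (matchingOf n) ↔ I.prefA a (m a) (n a) := by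
  simp only [prefersA, matchedA_matchingOf, exists_partnerA_matchingOf, not_true, false_or]

theorem prefersB_matchingOf {b : B} :
    prefersB I b (matchingOf m) (matchingOf n) ↔ I.prefB b (m.symm b) (n.symm b) := by
  simp only [prefersB, matchedB_matchingOf, exists_partnerB_matchingOf, not_true, false_or]

theorem delta_matchingOf : Delta I (matchingOf m) (matchingOf n) =
    ∑ a, vote (I.prefA a) (m a) (n a) + ∑ b, vote (I.prefB b) (m.symm b) (n.symm b) := by
  simp only [Delta, phi, Finset.card_filter, Fintype.sum_sum_type, prefers, prefersA_matchingOf,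
    prefersB_matchingOf, vote, Finset.sum_sub_distrib]
  push_cast
  ring

theorem blocks_matchingOf (hI : I.IsValid) {a : A} {b : B} :
    Blocks I (matchingOf m) a b ↔
      I.E a b ∧ I.prefA a b (m a) ∧ I.prefB b a (m.symm b) := by
  have hnotMem (h : I.prefA a b (m a)) : (a, b) ∉ matchingOf m :=
    fun hab => hI.prefA_irrefl a b (mem_matchingOf.1 hab ▸ h)
  simp only [Blocks, matchedA_matchingOf, matchedB_matchingOf, exists_partnerA_matchingOf,
    exists_partnerB_matchingOf, not_true, false_or]
  tauto

theorem wt_matchingOf (hI : I.IsValid) (hm : ∀ a, I.E a (m a)) {a : A} {b : B} (hab : I.E a b) :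
    wt I (matchingOf m) a b = vote (I.prefA a) b (m a) + vote (I.prefB b) a (m.symm b) := by
  have hwt : wt I (matchingOf m) a b =
      if I.prefA a b (m a) ∧ I.prefB b a (m.symm b) then 2
      else if I.prefA a (m a) b ∧ I.prefB b (m.symm b) a then -2 else 0 := by
    simp only [wt, blocks_matchingOf hI, hab, exists_partnerA_matchingOf,
      exists_partnerB_matchingOf, true_and]
  rw [hwt]
  by_cases hma : m a = b
  · subst hma
    simp [vote_self, hI.prefA_irrefl]
  · have hEb : I.E (m.symm b) b := by simpa using hm (m.symm b)
    have hmb : a ≠ m.symm b := fun h => hma (m.eq_symm_apply.1 h)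
    rcases hI.prefA_total hab (hm a) (Ne.symm hma) with hA | hA <;>
      rcases hI.prefB_total hab hEb hmb with hB | hB <;>
      simp [vote, hA, hB, hI.prefA_asymm hA, hI.prefB_asymm hB]

theorem wt_matchingOf_apply_eq_zero (hI : I.IsValid) (hm : ∀ a, I.E a (m a)) (a : A) :
    wt I (matchingOf m) a (m a) = 0 := by
  rw [wt_matchingOf hI hm (hm a), m.symm_apply_apply, vote_self, vote_self, add_zero]

theorem delta_eq_neg_sum_wt (hI : I.IsValid) (hm : ∀ a, I.E a (m a)) (hn : ∀ a, I.E a (n a)) :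
    Delta I (matchingOf m) (matchingOf n) = -∑ a, wt I (matchingOf m) a (n a) := by
  have hvotesB : ∑ b, vote (I.prefB b) (n.symm b) (m.symm b) =
      ∑ a, vote (I.prefB (n a)) a (m.symm (n a)) := by
    simp [← n.sum_comp]
  simp only [wt_matchingOf hI hm (hn _), Finset.sum_add_distrib, ← hvotesB, neg_add,
    ← Finset.sum_neg_distrib, neg_vote, delta_matchingOf]

theorem sum_wt_perm_nonpos (hI : I.IsValid) (hm : ∀ a, I.E a (m a))
    (hpop : ∀ N, IsPerfectMatching I N → 0 ≤ Delta I (matchingOf m) N)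
    (σ : Equiv.Perm A) (hσ : ∀ a, I.E (σ a) (m a)) :
    ∑ a, wt I (matchingOf m) (σ a) (m a) ≤ 0 := by
  let n : A ≃ B := σ.symm.trans m
  have hn (a : A) : I.E a (n a) := by simpa [n] using hσ (σ.symm a)
  have hsum : ∑ a, wt I (matchingOf m) (σ a) (m a) = ∑ a, wt I (matchingOf m) a (n a) := by
    rw [← Equiv.sum_comp σ fun a => wt I (matchingOf m) a (n a)]
    simp [n]
  have hdelta := hpop _ (isPerfectMatching_matchingOf hn)
  rw [delta_eq_neg_sum_wt hI hm hn] at hdelta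
  linarith

theorem exists_level_of_popular (hI : I.IsValid) (hm : ∀ a, I.E a (m a))
    (hpop : ∀ N, IsPerfectMatching I N → 0 ≤ Delta I (matchingOf m) N) :
    ∃ k : A → ℕ, (∀ a, k a ≤ Fintype.card A - 1) ∧
      ∀ a b, I.E a b → wt I (matchingOf m) a b ≤ 2 * (k (m.symm b) : ℤ) - 2 * k a := by
  let c : A → A → ℤ := fun a a' => wt I (matchingOf m) a' (m a) / 2
  have two_mul_c (a a' : A) : 2 * c a a' = wt I (matchingOf m) a' (m a) :=
    Int.mul_ediv_cancel' (two_dvd_wt I (matchingOf m) a' (m a))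
  have hc_self (a : A) : c a a = 0 := by simp [c, wt_matchingOf_apply_eq_zero hI hm]
  have hc_le_one (a a' : A) : c a a' ≤ 1 := by
    linarith [two_mul_c a a', wt_le_two I (matchingOf m) a' (m a)]
  obtain ⟨q, hq_nonneg, hq_le, hq_step⟩ :=
    exists_potential_of_perm_sum_nonpos (R := fun a a' => I.E a' (m a)) hm hc_self hc_le_one
      fun σ hσ => by
        have hsum := sum_wt_perm_nonpos hI hm hpop σ hσ
        simp only [← two_mul_c, ← Finset.mul_sum] at hsum
        linarith
  lift q to A → ℕ using hq_nonneg
  refine ⟨q, fun a => by simpa using hq_le a, fun a b hab => ?_⟩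
  have hstep := hq_step (m.symm b) a (by simpa using hab)
  have hwt := two_mul_c (m.symm b) a
  rw [m.apply_symm_apply] at hwt
  linarith

end Matchings

/-- If `|A| = |B| = n0` and `M` is a popular perfect matching in `G`,
then there is a dual certificate `α : A ∪ B → ℤ` with `α_a + α_b ≥ wt_M(a,b)` on every
edge, `α_a + α_b = 0` on matching edges, `α_a ∈ {0, −2, …, −2(n0−1)}` for `a ∈ A`,
`α_b ∈ {0, 2, …, 2(n0−1)}` for `b ∈ B`, and `Σ_u α_u = 0`. -/
theorem stmt11 {A B : Type*} [Fintype A] [Fintype B] [DecidableEq A] [DecidableEq B]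
    (I : PrefSys A B) (hI : I.IsValid) (n0 : ℕ)
    (hA : Fintype.card A = n0) (hB : Fintype.card B = n0)
    (M : Finset (A × B)) (hM : IsPerfectMatching I M)
    (hpop : ∀ N : Finset (A × B), IsPerfectMatching I N → 0 ≤ Delta I M N) :
    ∃ α : A ⊕ B → ℤ,
      (∀ a b, I.E a b → wt I M a b ≤ α (Sum.inl a) + α (Sum.inr b)) ∧
      (∀ a b, (a, b) ∈ M → α (Sum.inl a) + α (Sum.inr b) = 0) ∧
      (∀ a : A, ∃ k : ℕ, k ≤ n0 - 1 ∧ α (Sum.inl a) = -(2 * (k : ℤ))) ∧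
      (∀ b : B, ∃ k : ℕ, k ≤ n0 - 1 ∧ α (Sum.inr b) = 2 * (k : ℤ)) ∧
      (∑ u : A ⊕ B, α u = 0) := by
  obtain ⟨m, hm, rfl⟩ := hM.exists_eq_matchingOf
  obtain ⟨k, hk_le, hk_step⟩ := exists_level_of_popular hI hm hpop
  rw [hA] at hk_le
  refine ⟨Sum.elim (fun a => -(2 * (k a : ℤ))) (fun b => 2 * (k (m.symm b) : ℤ)),
    fun a b hab => ?_, fun a b hab => ?_, fun a => ⟨k a, hk_le a, rfl⟩,
    fun b => ⟨k (m.symm b), hk_le _, rfl⟩, ?_⟩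
  · simp only [Sum.elim_inl, Sum.elim_inr]
    linarith [hk_step a b hab]
  · simp [← mem_matchingOf.1 hab]
  · simp [← m.sum_comp]

end PopMax
end
end
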